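/- Let M = ℓ∞-⊕_{n=1}^∞ M_n(ℂ) be the ℓ∞-direct sum of the full matrix algebras M_n(ℂ), n = 1, 2, 3, … (bounded sequences (a_n) with a_n an n×n complex matrix, with supremum of operator norms as norm and coordinatewise product). Then there exist ε > 0 and finitely many unitary elements u₁,…,u_n ∈ M such that no element T = Σᵢ aᵢ ⊗ bᵢ of the algebraic tensor product M ⊗ M with Σᵢ aᵢ bᵢ = 1 satisfies ‖uⱼ·T − T·uⱼ‖_π < ε for all j = 1,…,n; consequently ℓ∞(𝕄_n) is not approximately amenable, answering negatively the question of Ghahramani–Loy. -/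

import Mathlib

open scoped TensorProduct ENNReal

set_option maxHeartbeats 1000000
set_option synthInstance.maxHeartbeats 1000000

noncomputable section

/-- The projective tensor seminorm of an element `u` of the algebraic tensor product
`X ⊗ Y` of two normed spaces: the infimum of `Σⱼ ‖xⱼ‖·‖yⱼ‖` over all representations
`u = Σⱼ xⱼ ⊗ yⱼ`. -/
def projSeminorm {X Y : Type*} [NormedAddCommGroup X] [NormedSpace ℂ X]
    [NormedAddCommGroup Y] [NormedSpace ℂ Y] (u : X ⊗[ℂ] Y) : ℝ :=
  sInf {s : ℝ | ∃ (n : ℕ) (x : Fin n → X) (y : Fin n → Y),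
    u = ∑ j, x j ⊗ₜ[ℂ] y j ∧ s = ∑ j, ‖x j‖ * ‖y j‖}

/-- The left bimodule action on the algebraic tensor product `A ⊗ A`:
`a · (x ⊗ y) = (a x) ⊗ y`. -/
def actL {A : Type*} [NormedRing A] [NormedAlgebra ℂ A] (a : A) :
    A ⊗[ℂ] A →ₗ[ℂ] A ⊗[ℂ] A :=
  TensorProduct.map (LinearMap.mulLeft ℂ a) LinearMap.id

/-- The right bimodule action on the algebraic tensor product `A ⊗ A`:
`(x ⊗ y) · a = x ⊗ (y a)`. -/
def actR {A : Type*} [NormedRing A] [NormedAlgebra ℂ A] (a : A) :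
    A ⊗[ℂ] A →ₗ[ℂ] A ⊗[ℂ] A :=
  TensorProduct.map LinearMap.id (LinearMap.mulRight ℂ a)

/-- The `ℓ∞`-direct sum `M = ℓ∞-⊕_{n=1}^∞ M_n(ℂ)` of all full matrix algebras,
realized as bounded sequences `(a_k)_{k∈ℕ}` with `a_k ∈ B(ℂ^{k+1})` (so the sizes run
through `1, 2, 3, …`), with the supremum of operator norms as norm and coordinatewise
product. -/
abbrev lpMn :=
  lp (fun k : ℕ => EuclideanSpace ℂ (Fin (k + 1)) →L[ℂ] EuclideanSpace ℂ (Fin (k + 1))) ∞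

/-!
Write `T = ∑ aᵢ ⊗ bᵢ` with `s` summands, let `φ` be a coordinate of size `k ≥ 4 s`, and cut `φ(T)`
into its slices `∑ᵢ φ(aᵢ) e_r e_r* φ(bᵢ)`, `r = 1, …, k`. Each slice has rank at most `s`, and its
commutators with the `φ(uⱼ)` are small in trace norm, uniformly in `r` and `k`, when `T` is nearly
invariant; but the slices add up to the identity, so their traces add up to `k`.

If the `φ(uⱼ)` have a spectral gap for conjugation on trace-zero matrices, independent of `k`, then
a matrix of rank at most `k / 4` that nearly commutes with them in trace norm has small trace.
Passing to a Hermitian matrix `H = v h²` with `v` unitary and `h ≥ 0`, the Powers–Størmer inequality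
shows that `h` nearly commutes with the `φ(uⱼ)` in Hilbert–Schmidt norm. By the gap `h` is close to
a scalar, which its low rank allows only if `h` is small.

Unitaries with such a gap are the clock matrix, a quadratic phase and the Fourier matrix.
Conjugation by the clock matrix multiplies the Weyl coefficients of a matrix by characters, which
bounds those far from the origin of the phase space `(ℤ/N)²`; the other two permute the
coefficients, up to phases, by a shear and a rotation, and ping-pong bounds the remaining ones.
-/

section PingPong

variable {α : Type*} [Fintype α]

theorem sum_le_sum_map_add_sum_abs (σ : Equiv.Perm α) (f : α → ℝ) (s : Finset α) :
    ∑ p ∈ s, f p ≤ ∑ p ∈ s.map σ.toEmbedding, f p + ∑ p, |f (σ p) - f p| := by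
  rw [Finset.sum_map]
  calc ∑ p ∈ s, f p ≤ ∑ p ∈ s, (f (σ p) + |f (σ p) - f p|) :=
        Finset.sum_le_sum fun p _ => by linarith [neg_abs_le (f (σ p) - f p)]
    _ = ∑ p ∈ s, f (σ p) + ∑ p ∈ s, |f (σ p) - f p| := Finset.sum_add_distrib
    _ ≤ ∑ p ∈ s, f (σ p) + ∑ p, |f (σ p) - f p| := by
        gcongr
        exact Finset.subset_univ s

theorem sum_abs_symm_sub (σ : Equiv.Perm α) (f : α → ℝ) :
    ∑ p, |f (σ.symm p) - f p| = ∑ p, |f (σ p) - f p| := by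
  rw [← Equiv.sum_comp σ fun p => |f (σ.symm p) - f p|]
  simp only [Equiv.symm_apply_apply, abs_sub_comm]

-- `σ` and `σ⁻¹` move `A₁` and `A₂` into disjoint parts of `B ∪ O`, while `τ` moves `B` into
-- `A₁ ∩ A₂`: for nearly invariant `f` the mass of `A₁` plus that of `A₂` is at most that of
-- `B ∪ O`, yet at least twice that of `B`, so everything is controlled by the mass of `O`.
theorem sum_le_of_pingPong [DecidableEq α] {f : α → ℝ} (hf : ∀ p, 0 ≤ f p)
    (σ τ : Equiv.Perm α) {A₁ A₂ B O : Finset α}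
    (hA₁ : ∀ p ∈ A₁, σ p ∈ B ∪ O) (hA₂ : ∀ p ∈ A₂, σ.symm p ∈ B ∪ O)
    (hdisj : ∀ p ∈ A₁, ∀ q ∈ A₂, σ p ≠ σ.symm q) (hB : ∀ p ∈ B, τ p ∈ A₁ ∩ A₂)
    (hcover : ∀ p, f p ≠ 0 → p ∈ A₁ ∪ A₂ ∪ (B ∪ O)) :
    ∑ p, f p ≤
      3 * ∑ p ∈ O, f p + 4 * ∑ p, |f (σ p) - f p| + 3 * ∑ p, |f (τ p) - f p| := by
  have map_subset {π : Equiv.Perm α} {s t : Finset α} (h : ∀ p ∈ s, π p ∈ t) :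
      s.map π.toEmbedding ⊆ t := by
    rw [Finset.map_eq_image]
    exact Finset.image_subset_iff.2 h
  have mono {s t : Finset α} (h : s ⊆ t) : ∑ p ∈ s, f p ≤ ∑ p ∈ t, f p :=
    Finset.sum_le_sum_of_subset_of_nonneg h fun p _ _ => hf p
  have union (s t : Finset α) : ∑ p ∈ s ∪ t, f p ≤ ∑ p ∈ s, f p + ∑ p ∈ t, f p := by
    have := Finset.sum_union_inter (s₁ := s) (s₂ := t) (f := f)
    have := Finset.sum_nonneg fun p (_ : p ∈ s ∩ t) => hf p
    linarith
  have disjoint_map : Disjoint (A₁.map σ.toEmbedding) (A₂.map σ.symm.toEmbedding) :=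
    Finset.disjoint_left.2 fun x h₁ h₂ => by
      obtain ⟨p, hp, rfl⟩ := Finset.mem_map.1 h₁
      obtain ⟨q, hq, heq⟩ := Finset.mem_map.1 h₂
      exact hdisj p hp q hq heq.symm
  have total : ∑ p, f p ≤ ∑ p ∈ A₁ ∪ A₂, f p + (∑ p ∈ B, f p + ∑ p ∈ O, f p) := by
    rw [← Finset.sum_subset (Finset.subset_univ (A₁ ∪ A₂ ∪ (B ∪ O)))
      fun p _ hp => not_not.1 fun h => hp (hcover p h)]
    linarith [union (A₁ ∪ A₂) (B ∪ O), union B O]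
  have expand : ∑ p ∈ A₁, f p + ∑ p ∈ A₂, f p ≤
      ∑ p ∈ B, f p + ∑ p ∈ O, f p + 2 * ∑ p, |f (σ p) - f p| := by
    have := sum_le_sum_map_add_sum_abs σ f A₁
    have := sum_le_sum_map_add_sum_abs σ.symm f A₂
    have := mono (Finset.union_subset (map_subset hA₁)
      (map_subset hA₂))
    rw [Finset.sum_union disjoint_map] at this
    linarith [union B O, sum_abs_symm_sub σ f]
  have swap : ∑ p ∈ B, f p ≤ ∑ p ∈ A₁ ∩ A₂, f p + ∑ p, |f (τ p) - f p| :=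
    (sum_le_sum_map_add_sum_abs τ f B).trans (add_le_add_left (mono (map_subset hB)) _)
  have inter_le : ∑ p ∈ A₁ ∩ A₂, f p ≤ ∑ p ∈ A₁ ∪ A₂, f p :=
    mono (Finset.inter_subset_left.trans Finset.subset_union_left)
  have := Finset.sum_union_inter (s₁ := A₁) (s₂ := A₂) (f := f)
  linarith

end PingPong

section PhaseSpace

variable {N : ℕ}

/-- A symplectic shear of the discrete phase space, by which conjugation with
`quadraticPhaseMatrix` permutes the Weyl coefficients of a matrix. -/
def shear : Equiv.Perm (ZMod N × ZMod N) where
  toFun p := (p.1, p.2 + 2 * p.1)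
  invFun p := (p.1, p.2 - 2 * p.1)
  left_inv p := by simp
  right_inv p := by simp

/-- The rotation of the discrete phase space by a right angle, by which conjugation with
`fourierMatrix` permutes the Weyl coefficients of a matrix. -/
def quarterTurn : Equiv.Perm (ZMod N × ZMod N) where
  toFun p := (-p.2, p.1)
  invFun p := (p.2, -p.1)
  left_inv p := by simp
  right_inv p := by simp

/-- A residue is far from zero if its representative of least absolute value is at least `N / 8` in
absolute value. If neither `s` nor `z` is far, then `z ± 2 s` does not wrap around modulo `N`. -/
def IsFar (s : ZMod N) : Prop := N ≤ 8 * s.valMinAbs.natAbs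

instance (s : ZMod N) : Decidable (IsFar s) := inferInstanceAs (Decidable (_ ≤ _))

/-- A phase-space point both of whose coordinates are close to zero. -/
def IsNear (p : ZMod N × ZMod N) : Prop := ¬ IsFar p.1 ∧ ¬ IsFar p.2

/-- A phase-space point on or below the diagonals: the frequency, as an integer of least absolute
value, is at most the shift in absolute value. -/
def IsFlat (p : ZMod N × ZMod N) : Prop := p.2.valMinAbs.natAbs ≤ p.1.valMinAbs.natAbs

instance (p : ZMod N × ZMod N) : Decidable (IsNear p) := inferInstanceAs (Decidable (_ ∧ _))

instance (p : ZMod N × ZMod N) : Decidable (IsFlat p) := inferInstanceAs (Decidable (_ ≤ _))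

theorem isFar_neg {s : ZMod N} : IsFar (-s) ↔ IsFar s := by
  rw [IsFar, ZMod.natAbs_valMinAbs_neg, IsFar]

theorem isNear_quarterTurn {p : ZMod N × ZMod N} (hp : IsNear p) : IsNear (quarterTurn p) :=
  ⟨fun h => hp.2 (isFar_neg.1 h), hp.1⟩

theorem natAbs_quarterTurn_lt {p : ZMod N × ZMod N} (hp : ¬ IsFlat p) :
    (quarterTurn p).2.valMinAbs.natAbs < (quarterTurn p).1.valMinAbs.natAbs := by
  simpa only [IsFlat, not_le, quarterTurn, Equiv.coe_fn_mk, ZMod.natAbs_valMinAbs_neg] using hp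

theorem valMinAbs_ne_neg_or_valMinAbs_ne {p : ZMod N × ZMod N} (hp : p ≠ 0) :
    p.2.valMinAbs ≠ -p.1.valMinAbs ∨ p.2.valMinAbs ≠ p.1.valMinAbs := by
  contrapose! hp
  have fst_eq : p.1 = 0 := (ZMod.valMinAbs_eq_zero _).1 (by lia)
  have snd_eq : p.2 = 0 := (ZMod.valMinAbs_eq_zero _).1 (by lia)
  exact Prod.ext fst_eq snd_eq

variable [NeZero N]

theorem valMinAbs_add_two_mul {s z : ZMod N} (hs : ¬ IsFar s) (hz : ¬ IsFar z) :
    (z + 2 * s).valMinAbs = z.valMinAbs + 2 * s.valMinAbs := by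
  unfold IsFar at hs hz
  rw [ZMod.valMinAbs_spec]
  refine ⟨by simp, ?_, ?_⟩ <;> omega

theorem valMinAbs_sub_two_mul {s z : ZMod N} (hs : ¬ IsFar s) (hz : ¬ IsFar z) :
    (z - 2 * s).valMinAbs = z.valMinAbs - 2 * s.valMinAbs := by
  unfold IsFar at hs hz
  rw [ZMod.valMinAbs_spec]
  refine ⟨by simp, ?_, ?_⟩ <;> omega

open Finset in
theorem sum_far_le {f : ZMod N × ZMod N → ℝ} (hf : ∀ p, 0 ≤ f p) :
    ∑ p with IsFar p.1 ∨ IsFar p.2, f p ≤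
      2 * ∑ p with IsFar p.1, f p + ∑ p, |f (quarterTurn p) - f p| := by
  let F₁ : Finset (ZMod N × ZMod N) := {p | IsFar p.1}
  let F₂ : Finset (ZMod N × ZMod N) := {p | IsFar p.2}
  have map_F₂ : F₂.map quarterTurn.toEmbedding ⊆ F₁ := fun p => by
    simp only [F₁, F₂, mem_map_equiv, mem_filter_univ]
    exact isFar_neg.1
  have le_F₁ : ∑ p ∈ F₂, f p ≤ ∑ p ∈ F₁, f p + ∑ p, |f (quarterTurn p) - f p| :=
    (sum_le_sum_map_add_sum_abs quarterTurn f F₂).trans <|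
      add_le_add_left (sum_le_sum_of_subset_of_nonneg map_F₂ fun p _ _ => hf p) _
  have union_inter := sum_union_inter (s₁ := F₁) (s₂ := F₂) (f := f)
  have inter_nonneg := sum_nonneg fun p (_ : p ∈ F₁ ∩ F₂) => hf p
  rw [filter_or]
  linarith

theorem not_isFlat_shear {p : ZMod N × ZMod N} (hp : IsNear p) (hflat : IsFlat p)
    (hne : p.2.valMinAbs ≠ -p.1.valMinAbs) : ¬ IsFlat (shear p) := by
  have := valMinAbs_add_two_mul hp.1 hp.2
  simp only [IsFlat, shear, Equiv.coe_fn_mk] at *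
  omega

theorem not_isFlat_shear_symm {p : ZMod N × ZMod N} (hp : IsNear p) (hflat : IsFlat p)
    (hne : p.2.valMinAbs ≠ p.1.valMinAbs) : ¬ IsFlat (shear.symm p) := by
  have := valMinAbs_sub_two_mul hp.1 hp.2
  simp only [IsFlat, shear, Equiv.coe_fn_symm_mk] at *
  omega

theorem shear_ne_shear_symm {p q : ZMod N × ZMod N} (hp : IsNear p) (hpflat : IsFlat p)
    (hpne : p.2.valMinAbs ≠ -p.1.valMinAbs) (hq : IsNear q) (hqflat : IsFlat q) :
    shear p ≠ shear.symm q := fun heq => by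
  have hfst : p.1.valMinAbs = q.1.valMinAbs := congrArg (·.1.valMinAbs) heq
  have hsnd : (p.2 + 2 * p.1).valMinAbs = (q.2 - 2 * q.1).valMinAbs :=
    congrArg (·.2.valMinAbs) heq
  rw [valMinAbs_add_two_mul hp.1 hp.2, valMinAbs_sub_two_mul hq.1 hq.2] at hsnd
  unfold IsFlat at *
  omega

open Finset in
theorem sum_le_of_shear_of_quarterTurn {f : ZMod N × ZMod N → ℝ} (hf : ∀ p, 0 ≤ f p)
    (h0 : f 0 = 0) :
    ∑ p, f p ≤ 6 * ∑ p with IsFar p.1, f p + 4 * ∑ p, |f (shear p) - f p| +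
      6 * ∑ p, |f (quarterTurn p) - f p| := by
  let A₁ : Finset (ZMod N × ZMod N) := {p | IsNear p ∧ IsFlat p ∧ p.2.valMinAbs ≠ -p.1.valMinAbs}
  let A₂ : Finset (ZMod N × ZMod N) := {p | IsNear p ∧ IsFlat p ∧ p.2.valMinAbs ≠ p.1.valMinAbs}
  let B : Finset (ZMod N × ZMod N) := {p | IsNear p ∧ ¬ IsFlat p}
  let O : Finset (ZMod N × ZMod N) := {p | IsFar p.1 ∨ IsFar p.2}
  have steep {p : ZMod N × ZMod N} (h : ¬ IsFlat p) : p ∈ B ∪ O := by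
    simp only [B, O, mem_union, mem_filter_univ]
    unfold IsNear
    tauto
  have quarterTurn_B (p) (hp : p ∈ B) : quarterTurn p ∈ A₁ ∩ A₂ := by
    obtain ⟨hnear, hsteep⟩ := (mem_filter_univ p).1 hp
    have := natAbs_quarterTurn_lt hsteep
    simp only [A₁, A₂, mem_inter, mem_filter_univ, isNear_quarterTurn hnear, true_and]
    unfold IsFlat
    omega
  have cover (p) (hp : f p ≠ 0) : p ∈ A₁ ∪ A₂ ∪ (B ∪ O) := by
    have hne := valMinAbs_ne_neg_or_valMinAbs_ne fun h : p = 0 => hp (h ▸ h0)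
    by_cases hfar : IsFar p.1 ∨ IsFar p.2
    · exact mem_union_right _ (mem_union_right _ ((mem_filter_univ p).2 hfar))
    by_cases hflat : IsFlat p
    · refine mem_union_left _ ?_
      have hnear : IsNear p := not_or.1 hfar
      simpa only [A₁, A₂, mem_union, mem_filter_univ, hnear, hflat, true_and] using hne
    · exact mem_union_right _ (steep hflat)
  have pingPong := sum_le_of_pingPong hf shear quarterTurn (A₁ := A₁) (A₂ := A₂) (B := B) (O := O)
    (fun p hp => by
      obtain ⟨hnear, hflat, hne⟩ := (mem_filter_univ p).1 hp
      exact steep (not_isFlat_shear hnear hflat hne))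
    (fun p hp => by
      obtain ⟨hnear, hflat, hne⟩ := (mem_filter_univ p).1 hp
      exact steep (not_isFlat_shear_symm hnear hflat hne))
    (fun p hp q hq => by
      obtain ⟨hnear, hflat, hne⟩ := (mem_filter_univ p).1 hp
      obtain ⟨hnear', hflat', -⟩ := (mem_filter_univ q).1 hq
      exact shear_ne_shear_symm hnear hflat hne hnear' hflat')
    quarterTurn_B cover
  have := sum_far_le hf
  linarith

end PhaseSpace

section Frobenius

open Matrix
open scoped Matrix.Norms.Frobenius

variable {m n : Type*} [Fintype m] [Fintype n]

theorem frobenius_norm_sq (A : Matrix m n ℂ) : ‖A‖ ^ 2 = ∑ i, ∑ j, ‖A i j‖ ^ 2 := by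
  have nonneg : 0 ≤ ∑ i, ∑ j, ‖A i j‖ ^ (2 : ℝ) := by positivity
  rw [frobenius_norm_def, ← Real.sqrt_eq_rpow, Real.sq_sqrt nonneg]
  simp only [Real.rpow_ofNat]

theorem frobenius_norm_sq_eq_trace (A : Matrix m n ℂ) :
    ((‖A‖ ^ 2 : ℝ) : ℂ) = (Aᴴ * A).trace := by
  simp only [frobenius_norm_sq, Complex.ofReal_sum, Complex.ofReal_pow, ← Complex.conj_mul',
    trace, diag_apply, mul_apply, conjTranspose_apply, RCLike.star_def]
  exact Finset.sum_comm

theorem frobenius_norm_sq_eq_re_trace (A : Matrix m n ℂ) : ‖A‖ ^ 2 = (Aᴴ * A).trace.re := by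
  rw [← frobenius_norm_sq_eq_trace, Complex.ofReal_re]

theorem norm_trace_mul_le (A : Matrix m n ℂ) (B : Matrix n m ℂ) :
    ‖(A * B).trace‖ ≤ ‖A‖ * ‖B‖ := by
  have sq_norm_transpose : ‖B‖ ^ 2 = ∑ p : m × n, ‖B p.2 p.1‖ ^ 2 := by
    rw [frobenius_norm_sq, Finset.sum_comm, Fintype.sum_prod_type]
  refine le_of_sq_le_sq ?_ (by positivity)
  calc ‖(A * B).trace‖ ^ 2 = ‖∑ p : m × n, A p.1 p.2 * B p.2 p.1‖ ^ 2 := by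
        simp only [trace, diag_apply, mul_apply, Fintype.sum_prod_type]
    _ ≤ (∑ p : m × n, ‖A p.1 p.2‖ * ‖B p.2 p.1‖) ^ 2 := by
        gcongr
        exact norm_sum_le_of_le _ fun p _ => norm_mul_le _ _
    _ ≤ (∑ p : m × n, ‖A p.1 p.2‖ ^ 2) * ∑ p : m × n, ‖B p.2 p.1‖ ^ 2 :=
        Finset.sum_mul_sq_le_sq_mul_sq _ _ _
    _ = (‖A‖ * ‖B‖) ^ 2 := by
        rw [mul_pow, frobenius_norm_sq, sq_norm_transpose, Fintype.sum_prod_type]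

variable [DecidableEq m] {U : Matrix m m ℂ}

theorem frobenius_norm_unitary_mul (hU : U ∈ unitaryGroup m ℂ) (A : Matrix m n ℂ) :
    ‖U * A‖ = ‖A‖ := by
  rw [← sq_eq_sq₀ (norm_nonneg _) (norm_nonneg _), frobenius_norm_sq_eq_re_trace,
    frobenius_norm_sq_eq_re_trace, conjTranspose_mul, Matrix.mul_assoc, ← Matrix.mul_assoc Uᴴ,
    ← star_eq_conjTranspose U, mem_unitaryGroup_iff'.1 hU, Matrix.one_mul]

theorem frobenius_norm_mul_unitary (hU : U ∈ unitaryGroup m ℂ) (A : Matrix n m ℂ) :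
    ‖A * U‖ = ‖A‖ := by
  rw [← frobenius_norm_conjTranspose, conjTranspose_mul, ← star_eq_conjTranspose U,
    frobenius_norm_unitary_mul (Unitary.star_mem hU), frobenius_norm_conjTranspose]

theorem frobenius_norm_sub_unitary_conj (hU : U ∈ unitaryGroup m ℂ) (A : Matrix m m ℂ) :
    ‖A - Uᴴ * A * U‖ = ‖⁅U, A⁆‖ := by
  rw [← frobenius_norm_unitary_mul hU, mul_sub, Matrix.mul_assoc, ← Matrix.mul_assoc U,
    ← star_eq_conjTranspose, mem_unitaryGroup_iff.1 hU, Matrix.one_mul, Ring.lie_def]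

theorem norm_trace_mul_unitary_le (hU : U ∈ unitaryGroup m ℂ)
    (A : Matrix m m ℂ) : ‖(U * A).trace‖ ≤ ‖(1 : Matrix m m ℂ)‖ * ‖A‖ := by
  simpa only [Matrix.one_mul, frobenius_norm_unitary_mul hU] using norm_trace_mul_le 1 (U * A)

end Frobenius

section Expander

open Matrix
open scoped Matrix.Norms.Frobenius

variable {ι κ J : Type*} [Fintype ι] [DecidableEq ι] [Fintype κ] [DecidableEq κ] [Fintype J]

/-- A finite family of unitaries is a quantum expander with constant `K` if it has a spectral gap
for its action by conjugation on trace-zero matrices, measured in the Frobenius norm. -/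
structure IsQuantumExpander (U : J → Matrix ι ι ℂ) (K : ℝ) : Prop where
  mem_unitaryGroup (j : J) : U j ∈ unitaryGroup ι ℂ
  norm_sq_le {A : Matrix ι ι ℂ} : A.trace = 0 → ‖A‖ ^ 2 ≤ K * ∑ j, ‖⁅U j, A⁆‖ ^ 2

theorem frobenius_norm_submatrix_equiv (e : κ ≃ ι) (A : Matrix ι ι ℂ) :
    ‖A.submatrix e e‖ = ‖A‖ := by
  rw [← sq_eq_sq₀ (norm_nonneg _) (norm_nonneg _), frobenius_norm_sq, frobenius_norm_sq]
  simp only [submatrix_apply]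
  rw [Equiv.sum_comp e fun i => ∑ j, ‖A i (e j)‖ ^ 2]
  exact Finset.sum_congr rfl fun i _ => Equiv.sum_comp e fun j => ‖A i j‖ ^ 2

theorem IsQuantumExpander.submatrix {U : J → Matrix ι ι ℂ} {K : ℝ} (hU : IsQuantumExpander U K)
    (e : κ ≃ ι) : IsQuantumExpander (fun j => (U j).submatrix e e) K where
  mem_unitaryGroup j := by
    rw [mem_unitaryGroup_iff, star_eq_conjTranspose, conjTranspose_submatrix, submatrix_mul_equiv,
      ← star_eq_conjTranspose, mem_unitaryGroup_iff.1 (hU.mem_unitaryGroup j), submatrix_one_equiv]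
  norm_sq_le {A} hA := by
    have trace_eq : (A.submatrix e.symm e.symm).trace = 0 := by
      rw [← hA]
      exact Equiv.sum_comp e.symm fun i => A i i
    have lie_eq (j : J) :
        ⁅(U j).submatrix e e, A⁆ = ⁅U j, A.submatrix e.symm e.symm⁆.submatrix e e := by
      simp only [Ring.lie_def, submatrix_sub, ← submatrix_mul_equiv _ _ _ e, Pi.sub_apply,
        submatrix_submatrix, Equiv.symm_comp_self, submatrix_id_id]
    simpa only [lie_eq, frobenius_norm_submatrix_equiv] using hU.norm_sq_le trace_eq

theorem frobenius_norm_sq_sub_smul_one [Nonempty ι] (A : Matrix ι ι ℂ) :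
    Fintype.card ι * ‖A - (A.trace / Fintype.card ι) • (1 : Matrix ι ι ℂ)‖ ^ 2 =
      Fintype.card ι * ‖A‖ ^ 2 - ‖A.trace‖ ^ 2 := by
  have card_ne : (Fintype.card ι : ℂ) ≠ 0 := Nat.cast_ne_zero.2 Fintype.card_ne_zero
  apply Complex.ofReal_injective
  push_cast
  rw [← Complex.ofReal_pow, ← Complex.ofReal_pow ‖A‖, frobenius_norm_sq_eq_trace,
    frobenius_norm_sq_eq_trace, ← Complex.conj_mul']
  simp only [conjTranspose_sub, conjTranspose_smul, conjTranspose_one, sub_mul, mul_sub, trace_sub,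
    Matrix.smul_mul, Matrix.mul_smul, Matrix.one_mul, Matrix.mul_one, trace_smul,
    trace_conjTranspose, trace_one, smul_eq_mul, RCLike.star_def, map_div₀, Complex.conj_natCast]
  field_simp
  ring

theorem IsQuantumExpander.card_mul_norm_sq_le {U : J → Matrix ι ι ℂ} {K : ℝ}
    (hU : IsQuantumExpander U K) (A : Matrix ι ι ℂ) :
    Fintype.card ι * ‖A‖ ^ 2 ≤
      ‖A.trace‖ ^ 2 + Fintype.card ι * (K * ∑ j, ‖⁅U j, A⁆‖ ^ 2) := by
  cases isEmpty_or_nonempty ι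
  · simp
  have trace_eq_zero : (A - (A.trace / Fintype.card ι) • (1 : Matrix ι ι ℂ)).trace = 0 := by
    simp [Fintype.card_ne_zero]
  have lie_eq (j : J) :
      ⁅U j, A - (A.trace / Fintype.card ι) • (1 : Matrix ι ι ℂ)⁆ = ⁅U j, A⁆ := by
    simp [Ring.lie_def, mul_sub, sub_mul]
  have := frobenius_norm_sq_sub_smul_one A
  have := mul_le_mul_of_nonneg_left (hU.norm_sq_le trace_eq_zero)
    (Nat.cast_nonneg (α := ℝ) (Fintype.card ι))
  simp only [lie_eq] at this
  linarith

end Expander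

section Weyl

open Matrix
open scoped Matrix.Norms.Frobenius

theorem sum_abs_norm_sq_sub_norm_sq_le {α E : Type*} [Fintype α] [SeminormedAddCommGroup E]
    (u v : α → E) {L : ℝ} (hL : 0 < L) :
    ∑ p, |‖u p‖ ^ 2 - ‖v p‖ ^ 2| ≤
      L * ∑ p, ‖u p - v p‖ ^ 2 + (∑ p, ‖u p‖ ^ 2 + ∑ p, ‖v p‖ ^ 2) / (2 * L) := by
  have pointwise (x y : E) :
      |‖x‖ ^ 2 - ‖y‖ ^ 2| ≤ L * ‖x - y‖ ^ 2 + (‖x‖ ^ 2 + ‖y‖ ^ 2) / (2 * L) := by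
    have amgm : ‖x - y‖ * (‖x‖ + ‖y‖) ≤ L * ‖x - y‖ ^ 2 + (‖x‖ + ‖y‖) ^ 2 / (4 * L) := by
      rw [← sub_nonneg]
      calc 0 ≤ (2 * L * ‖x - y‖ - (‖x‖ + ‖y‖)) ^ 2 / (4 * L) := by positivity
        _ = _ := by field_simp; ring
    calc |‖x‖ ^ 2 - ‖y‖ ^ 2| = |‖x‖ - ‖y‖| * (‖x‖ + ‖y‖) := by
          rw [sq_sub_sq, abs_mul, abs_of_nonneg (by positivity : 0 ≤ ‖x‖ + ‖y‖), mul_comm]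
      _ ≤ ‖x - y‖ * (‖x‖ + ‖y‖) := by gcongr; exact abs_norm_sub_norm_le x y
      _ ≤ L * ‖x - y‖ ^ 2 + (‖x‖ + ‖y‖) ^ 2 / (4 * L) := amgm
      _ ≤ L * ‖x - y‖ ^ 2 + 2 * (‖x‖ ^ 2 + ‖y‖ ^ 2) / (4 * L) := by gcongr; exact add_sq_le
      _ = L * ‖x - y‖ ^ 2 + (‖x‖ ^ 2 + ‖y‖ ^ 2) / (2 * L) := by field_simp; ring
  calc _ ≤ ∑ p, (L * ‖u p - v p‖ ^ 2 + (‖u p‖ ^ 2 + ‖v p‖ ^ 2) / (2 * L)) :=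
        Finset.sum_le_sum fun p _ => pointwise _ _
    _ = _ := by rw [Finset.sum_add_distrib, ← Finset.mul_sum, ← Finset.sum_div,
        Finset.sum_add_distrib]

variable {N : ℕ} [NeZero N]

open ZMod (stdAddChar)
open ComplexConjugate

theorem sum_stdAddChar_mul_conj (b c : ZMod N) :
    ∑ z, stdAddChar (z * b) * conj (stdAddChar (z * c)) = if b = c then (N : ℂ) else 0 := by
  have := AddChar.sum_mulShift (b - c) (ZMod.isPrimitive_stdAddChar N)
  simpa only [← AddChar.map_neg_eq_conj, ← AddChar.map_add_eq_mul, mul_sub, sub_eq_zero,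
    sub_eq_add_neg (_ * b), ZMod.card, Nat.cast_ite, Nat.cast_zero] using this

theorem norm_stdAddChar (a : ZMod N) : ‖stdAddChar a‖ = 1 := by
  rw [ZMod.stdAddChar_apply, Circle.norm_coe]

theorem conj_mul_stdAddChar (a : ZMod N) : conj (stdAddChar a) * stdAddChar a = 1 := by
  rw [Complex.conj_mul', norm_stdAddChar, Complex.ofReal_one, one_pow]

theorem four_mul_natAbs_valMinAbs_div_le_norm_stdAddChar_sub_one (s : ZMod N) :
    4 * s.valMinAbs.natAbs / N ≤ ‖stdAddChar s - 1‖ := by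
  have hN : (0 : ℝ) < N := Nat.cast_pos.2 (NeZero.pos N)
  let θ : ℝ := 2 * Real.pi * s.valMinAbs / N
  have stdAddChar_eq : stdAddChar s = Complex.exp (Complex.I * θ) := by
    conv_lhs => rw [← ZMod.coe_valMinAbs s, ZMod.stdAddChar_coe]
    simp only [θ]
    push_cast
    ring_nf
  have abs_θ : |θ / 2| = Real.pi * s.valMinAbs.natAbs / N := by
    simp only [θ, abs_div, abs_mul, Nat.cast_natAbs, Int.cast_abs, abs_of_pos hN,
      abs_of_pos Real.pi_pos, abs_two]
    ring
  have abs_θ_le : |θ / 2| ≤ Real.pi / 2 := by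
    have : 2 * (s.valMinAbs.natAbs : ℝ) ≤ N := by
      exact_mod_cast (Nat.mul_le_mul_left 2 s.natAbs_valMinAbs_le).trans (Nat.mul_div_le N 2)
    rw [abs_θ, div_le_div_iff₀ hN two_pos]
    nlinarith [Real.pi_pos]
  calc 4 * s.valMinAbs.natAbs / N = 2 * (2 / Real.pi * |θ / 2|) := by
        rw [abs_θ]
        field_simp
        ring
    _ ≤ 2 * |Real.sin (θ / 2)| := by
        gcongr
        exact Real.mul_abs_le_abs_sin abs_θ_le
    _ = ‖stdAddChar s - 1‖ := by
        rw [stdAddChar_eq, Complex.norm_exp_I_mul_ofReal_sub_one, norm_mul, Real.norm_two,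
          Real.norm_eq_abs]

theorem one_half_le_norm_stdAddChar_sub_one {s : ZMod N} (hs : IsFar s) :
    1 / 2 ≤ ‖stdAddChar s - 1‖ := by
  refine le_trans ?_ (four_mul_natAbs_valMinAbs_div_le_norm_stdAddChar_sub_one s)
  rw [div_le_div_iff₀ two_pos (Nat.cast_pos.2 (NeZero.pos N))]
  have : (N : ℝ) ≤ 8 * s.valMinAbs.natAbs := by exact_mod_cast hs
  linarith

/-- The coefficients of a matrix in the Weyl basis of products of shift and clock matrices, up to
normalisation; the first coordinate of `p` is the shift and the second the frequency. -/
def weylCoeff (A : Matrix (ZMod N) (ZMod N) ℂ) (p : ZMod N × ZMod N) : ℂ :=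
  ∑ b, stdAddChar (p.2 * b) * A b (b + p.1)

theorem weylCoeff_sub (A B : Matrix (ZMod N) (ZMod N) ℂ) (p : ZMod N × ZMod N) :
    weylCoeff (A - B) p = weylCoeff A p - weylCoeff B p := by
  simp only [weylCoeff, Matrix.sub_apply, mul_sub, Finset.sum_sub_distrib]

theorem weylCoeff_zero (A : Matrix (ZMod N) (ZMod N) ℂ) : weylCoeff A 0 = A.trace := by
  simp [weylCoeff, trace]

theorem sum_norm_sq_sum_stdAddChar_mul (a : ZMod N → ℂ) :
    ∑ z, ‖∑ b, stdAddChar (z * b) * a b‖ ^ 2 = N * ∑ b, ‖a b‖ ^ 2 := by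
  have orthogonality (b c : ZMod N) :
      ∑ z, stdAddChar (z * b) * a b * conj (stdAddChar (z * c) * a c) =
        if b = c then (N : ℂ) * (a b * conj (a c)) else 0 := by
    calc _ = ∑ z, stdAddChar (z * b) * conj (stdAddChar (z * c)) * (a b * conj (a c)) :=
          Finset.sum_congr rfl fun z _ => by rw [RingHom.map_mul, mul_mul_mul_comm]
      _ = _ := by rw [← Finset.sum_mul, sum_stdAddChar_mul_conj, ite_mul, zero_mul]
  apply Complex.ofReal_injective
  push_cast
  simp_rw [← Complex.mul_conj', map_sum, Finset.sum_mul_sum]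
  rw [Finset.sum_comm, Finset.mul_sum]
  refine Finset.sum_congr rfl fun b _ => ?_
  rw [Finset.sum_comm]
  simp only [orthogonality, Finset.sum_ite_eq, Finset.mem_univ, if_true]

theorem sum_norm_weylCoeff_sq (A : Matrix (ZMod N) (ZMod N) ℂ) :
    ∑ p, ‖weylCoeff A p‖ ^ 2 = N * ‖A‖ ^ 2 := by
  calc ∑ p, ‖weylCoeff A p‖ ^ 2 = N * ∑ s, ∑ b, ‖A b (b + s)‖ ^ 2 := by
        simp only [weylCoeff, Fintype.sum_prod_type, sum_norm_sq_sum_stdAddChar_mul,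
          Finset.mul_sum]
    _ = N * ‖A‖ ^ 2 := by
        rw [Finset.sum_comm, frobenius_norm_sq]
        exact congrArg _ <| Finset.sum_congr rfl fun b _ =>
          Equiv.sum_comp (Equiv.addLeft b) fun c => ‖A b c‖ ^ 2

/-- The clock matrix, which multiplies every Weyl coefficient by the phase of its shift. -/
def clockMatrix (N : ℕ) [NeZero N] : Matrix (ZMod N) (ZMod N) ℂ := diagonal fun a => stdAddChar a

/-- The diagonal matrix of a quadratic character, the metaplectic operator over `shear`. -/
def quadraticPhaseMatrix (N : ℕ) [NeZero N] : Matrix (ZMod N) (ZMod N) ℂ :=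
  diagonal fun a => stdAddChar (a * a)

/-- The unitary discrete Fourier transform, the metaplectic operator over `quarterTurn`. -/
def fourierMatrix (N : ℕ) [NeZero N] : Matrix (ZMod N) (ZMod N) ℂ :=
  of fun a b => ((√N : ℝ) : ℂ)⁻¹ * stdAddChar (a * b)

theorem diagonal_stdAddChar_mem_unitaryGroup (g : ZMod N → ZMod N) :
    diagonal (fun a => stdAddChar (g a)) ∈ unitaryGroup (ZMod N) ℂ := by
  rw [mem_unitaryGroup_iff, star_eq_conjTranspose, diagonal_conjTranspose, diagonal_mul_diagonal]
  simp only [Pi.star_apply, RCLike.star_def, Complex.mul_conj', norm_stdAddChar, Complex.ofReal_one,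
    one_pow, diagonal_one]

theorem inv_sqrt_mul_inv_sqrt (N : ℕ) : ((√N : ℝ) : ℂ)⁻¹ * ((√N : ℝ) : ℂ)⁻¹ = (N : ℂ)⁻¹ := by
  rw [← mul_inv, ← Complex.ofReal_mul, Real.mul_self_sqrt (Nat.cast_nonneg N),
    Complex.ofReal_natCast]

theorem fourierMatrix_mul_conj (a b c d : ZMod N) :
    fourierMatrix N a b * conj (fourierMatrix N c d) =
      (N : ℂ)⁻¹ * (stdAddChar (a * b) * conj (stdAddChar (c * d))) := by
  simp only [fourierMatrix, of_apply, map_mul, map_inv₀, Complex.conj_ofReal]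
  rw [mul_mul_mul_comm, inv_sqrt_mul_inv_sqrt]

theorem fourierMatrix_mem_unitaryGroup : fourierMatrix N ∈ unitaryGroup (ZMod N) ℂ := by
  have card_ne : (N : ℂ) ≠ 0 := Nat.cast_ne_zero.2 (NeZero.ne N)
  rw [mem_unitaryGroup_iff, star_eq_conjTranspose]
  ext a c
  simp only [mul_apply, conjTranspose_apply, RCLike.star_def, fourierMatrix_mul_conj,
    ← Finset.mul_sum, mul_comm a, mul_comm c, sum_stdAddChar_mul_conj, one_apply, mul_ite,
    mul_zero, inv_mul_cancel₀ card_ne]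

theorem weylCoeff_clockMatrix_conj (A : Matrix (ZMod N) (ZMod N) ℂ) (p : ZMod N × ZMod N) :
    weylCoeff ((clockMatrix N)ᴴ * A * clockMatrix N) p = stdAddChar p.1 * weylCoeff A p := by
  simp only [weylCoeff, clockMatrix, diagonal_conjTranspose, mul_diagonal, diagonal_mul,
    Finset.mul_sum, Pi.star_apply, RCLike.star_def, AddChar.map_add_eq_mul]
  refine Finset.sum_congr rfl fun b _ => ?_
  linear_combination (stdAddChar (p.2 * b) * stdAddChar p.1 * A b (b + p.1)) *
    conj_mul_stdAddChar b

theorem weylCoeff_quadraticPhaseMatrix_conj (A : Matrix (ZMod N) (ZMod N) ℂ)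
    (p : ZMod N × ZMod N) :
    weylCoeff ((quadraticPhaseMatrix N)ᴴ * A * quadraticPhaseMatrix N) p =
      stdAddChar (p.1 * p.1) * weylCoeff A (shear p) := by
  simp only [weylCoeff, quadraticPhaseMatrix, diagonal_conjTranspose, mul_diagonal, diagonal_mul,
    Finset.mul_sum, Pi.star_apply, RCLike.star_def, shear, Equiv.coe_fn_mk]
  refine Finset.sum_congr rfl fun b _ => ?_
  have complete_square : stdAddChar (p.2 * b) * conj (stdAddChar (b * b)) *
      stdAddChar ((b + p.1) * (b + p.1)) =
        stdAddChar (p.1 * p.1) * stdAddChar ((p.2 + 2 * p.1) * b) := by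
    simp only [← AddChar.map_neg_eq_conj, ← AddChar.map_add_eq_mul]
    ring_nf
  linear_combination A b (b + p.1) * complete_square

theorem weylCoeff_fourierMatrix_conj_eq_sum (A : Matrix (ZMod N) (ZMod N) ℂ)
    (p : ZMod N × ZMod N) :
    weylCoeff ((fourierMatrix N)ᴴ * A * fourierMatrix N) p =
      ∑ q, A (q + p.2) q * stdAddChar (q * p.1) := by
  have card_ne : (N : ℂ) ≠ 0 := Nat.cast_ne_zero.2 (NeZero.ne N)
  have term (b q r : ZMod N) :
      stdAddChar (p.2 * b) * (conj (fourierMatrix N r b) * A r q * fourierMatrix N q (b + p.1)) =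
        (N : ℂ)⁻¹ * A r q * stdAddChar (q * p.1) *
          (stdAddChar (b * (q + p.2)) * conj (stdAddChar (b * r))) := by
    have := fourierMatrix_mul_conj q (b + p.1) r b
    rw [mul_add, AddChar.map_add_eq_mul] at this
    rw [mul_add, AddChar.map_add_eq_mul, mul_comm b q, mul_comm b p.2, mul_comm b r]
    linear_combination stdAddChar (p.2 * b) * A r q * this
  calc _ = ∑ q, ∑ r, ∑ b, (N : ℂ)⁻¹ * A r q * stdAddChar (q * p.1) *
          (stdAddChar (b * (q + p.2)) * conj (stdAddChar (b * r))) := by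
        simp only [weylCoeff, mul_apply, Finset.mul_sum, Finset.sum_mul, conjTranspose_apply,
          RCLike.star_def, term]
        rw [Finset.sum_comm]
        exact Finset.sum_congr rfl fun q _ => Finset.sum_comm
    _ = ∑ q, A (q + p.2) q * stdAddChar (q * p.1) := by
        simp only [← Finset.mul_sum, sum_stdAddChar_mul_conj, mul_ite, mul_zero,
          Finset.sum_ite_eq, Finset.mem_univ, if_true]
        refine Finset.sum_congr rfl fun q _ => ?_
        field_simp

theorem weylCoeff_fourierMatrix_conj (A : Matrix (ZMod N) (ZMod N) ℂ) (p : ZMod N × ZMod N) :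
    weylCoeff ((fourierMatrix N)ᴴ * A * fourierMatrix N) p =
      stdAddChar (-(p.2 * p.1)) * weylCoeff A (quarterTurn p) := by
  rw [weylCoeff_fourierMatrix_conj_eq_sum, weylCoeff, Finset.mul_sum,
    ← Equiv.sum_comp (Equiv.subRight p.2)]
  refine Finset.sum_congr rfl fun b _ => ?_
  simp only [Equiv.subRight_apply, sub_add_cancel, quarterTurn, Equiv.coe_fn_mk,
    ← sub_eq_add_neg, sub_mul, mul_comm p.1 b]
  rw [sub_eq_neg_add (b * p.1), AddChar.map_add_eq_mul]
  ring

theorem sum_abs_norm_weylCoeff_sq_comp_sub_le {U : Matrix (ZMod N) (ZMod N) ℂ}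
    (hU : U ∈ unitaryGroup (ZMod N) ℂ) (A : Matrix (ZMod N) (ZMod N) ℂ)
    {σ : Equiv.Perm (ZMod N × ZMod N)}
    (hσ : ∀ p, ‖weylCoeff (Uᴴ * A * U) p‖ = ‖weylCoeff A (σ p)‖) {L : ℝ} (hL : 0 < L) :
    ∑ p, |‖weylCoeff A (σ p)‖ ^ 2 - ‖weylCoeff A p‖ ^ 2| ≤
      N * (L * ‖⁅U, A⁆‖ ^ 2 + ‖A‖ ^ 2 / L) := by
  have := sum_abs_norm_sq_sub_norm_sq_le (weylCoeff A) (weylCoeff (Uᴴ * A * U)) hL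
  simp only [← weylCoeff_sub, hσ] at this
  rw [Equiv.sum_comp σ fun p => ‖weylCoeff A p‖ ^ 2, sum_norm_weylCoeff_sq,
    sum_norm_weylCoeff_sq, frobenius_norm_sub_unitary_conj hU] at this
  simp only [abs_sub_comm (‖weylCoeff A (σ _)‖ ^ 2)]
  refine this.trans_eq ?_
  field_simp
  ring

open Finset in
theorem sum_far_norm_weylCoeff_sq_le (A : Matrix (ZMod N) (ZMod N) ℂ) :
    ∑ p with IsFar p.1, ‖weylCoeff A p‖ ^ 2 ≤ N * (4 * ‖⁅clockMatrix N, A⁆‖ ^ 2) := by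
  have hclock : clockMatrix N ∈ unitaryGroup (ZMod N) ℂ := diagonal_stdAddChar_mem_unitaryGroup id
  have pointwise {p : ZMod N × ZMod N} (hp : IsFar p.1) : ‖weylCoeff A p‖ ^ 2 ≤
      4 * ‖weylCoeff (A - (clockMatrix N)ᴴ * A * clockMatrix N) p‖ ^ 2 := by
    have : 1 / 2 * ‖weylCoeff A p‖ ≤
        ‖weylCoeff (A - (clockMatrix N)ᴴ * A * clockMatrix N) p‖ := by
      rw [weylCoeff_sub, weylCoeff_clockMatrix_conj, ← one_sub_mul, norm_mul, norm_sub_rev]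
      gcongr
      exact one_half_le_norm_stdAddChar_sub_one hp
    calc ‖weylCoeff A p‖ ^ 2 = 4 * (1 / 2 * ‖weylCoeff A p‖) ^ 2 := by ring
      _ ≤ _ := by gcongr
  calc ∑ p with IsFar p.1, ‖weylCoeff A p‖ ^ 2
      ≤ ∑ p with IsFar p.1,
          4 * ‖weylCoeff (A - (clockMatrix N)ᴴ * A * clockMatrix N) p‖ ^ 2 :=
        sum_le_sum fun p hp => pointwise ((mem_filter_univ p).1 hp)
    _ ≤ ∑ p, 4 * ‖weylCoeff (A - (clockMatrix N)ᴴ * A * clockMatrix N) p‖ ^ 2 :=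
        sum_le_sum_of_subset_of_nonneg (filter_subset _ _) fun p _ _ => by positivity
    _ = N * (4 * ‖⁅clockMatrix N, A⁆‖ ^ 2) := by
        rw [← mul_sum, sum_norm_weylCoeff_sq, frobenius_norm_sub_unitary_conj hclock]
        ring

theorem isQuantumExpander_clock_quadraticPhase_fourier (N : ℕ) [NeZero N] :
    IsQuantumExpander ![clockMatrix N, quadraticPhaseMatrix N, fourierMatrix N] 240 where
  mem_unitaryGroup := by
    simpa only [Fin.forall_fin_succ] using
      ⟨diagonal_stdAddChar_mem_unitaryGroup _, diagonal_stdAddChar_mem_unitaryGroup _,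
        fourierMatrix_mem_unitaryGroup, finZeroElim⟩
  norm_sq_le {A} hA := by
    -- With `L = 20` the errors `4 ‖A‖² / L` and `6 ‖A‖² / L` add up to half of `‖A‖²`.
    have clock := sum_far_norm_weylCoeff_sq_le A
    have phase := sum_abs_norm_weylCoeff_sq_comp_sub_le
      (diagonal_stdAddChar_mem_unitaryGroup fun a => a * a) A (σ := shear)
      (fun p => by
        rw [← quadraticPhaseMatrix, weylCoeff_quadraticPhaseMatrix_conj, norm_mul, norm_stdAddChar,
          one_mul]) (L := 20) (by norm_num)
    have fourier := sum_abs_norm_weylCoeff_sq_comp_sub_le fourierMatrix_mem_unitaryGroup A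
      (σ := quarterTurn)
      (fun p => by rw [weylCoeff_fourierMatrix_conj, norm_mul, norm_stdAddChar, one_mul])
      (L := 20) (by norm_num)
    have spread := sum_le_of_shear_of_quarterTurn (f := fun p => ‖weylCoeff A p‖ ^ 2)
      (fun p => sq_nonneg _) (by simp only [weylCoeff_zero, hA, norm_zero]; norm_num)
    rw [sum_norm_weylCoeff_sq] at spread
    have hN : (0 : ℝ) < N := Nat.cast_pos.2 (NeZero.pos N)
    have : ‖A‖ ^ 2 ≤ 6 * (4 * ‖⁅clockMatrix N, A⁆‖ ^ 2) +
        4 * (20 * ‖⁅quadraticPhaseMatrix N, A⁆‖ ^ 2 + ‖A‖ ^ 2 / 20) +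
        6 * (20 * ‖⁅fourierMatrix N, A⁆‖ ^ 2 + ‖A‖ ^ 2 / 20) :=
      le_of_mul_le_mul_left (spread.trans (by rw [quadraticPhaseMatrix]; linarith)) hN
    simp only [Fin.sum_univ_three, cons_val]
    linarith [sq_nonneg ‖⁅clockMatrix N, A⁆‖, sq_nonneg ‖⁅quadraticPhaseMatrix N, A⁆‖]

theorem exists_isQuantumExpander (N : ℕ) [NeZero N] :
    ∃ U : Fin 3 → Matrix (Fin N) (Fin N) ℂ, IsQuantumExpander U 240 :=
  ⟨_, (isQuantumExpander_clock_quadraticPhase_fourier N).submatrix (ZMod.finEquiv N).toEquiv⟩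

end Weyl

section TraceNorm

open Matrix
open scoped Matrix.Norms.Frobenius

variable {ι : Type*} [Fintype ι] [DecidableEq ι] {U A : Matrix ι ι ℂ}

/-- The trace norm of a square matrix, in its dual form: the supremum of `‖tr (Y A)‖` over all
unitaries `Y`. -/
def traceNorm (A : Matrix ι ι ℂ) : ℝ :=
  ⨆ Y : unitaryGroup ι ℂ, ‖((Y : Matrix ι ι ℂ) * A).trace‖

theorem norm_trace_unitary_mul_le_traceNorm (hU : U ∈ unitaryGroup ι ℂ) (A : Matrix ι ι ℂ) :
    ‖(U * A).trace‖ ≤ traceNorm A :=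
  le_ciSup (f := fun Y : unitaryGroup ι ℂ => ‖((Y : Matrix ι ι ℂ) * A).trace‖)
    ⟨_, Set.forall_mem_range.2 fun Y => norm_trace_mul_unitary_le Y.2 A⟩ ⟨U, hU⟩

theorem traceNorm_le {c : ℝ} (h : ∀ Y ∈ unitaryGroup ι ℂ, ‖(Y * A).trace‖ ≤ c) :
    traceNorm A ≤ c :=
  ciSup_le fun Y => h Y Y.2

theorem traceNorm_nonneg (A : Matrix ι ι ℂ) : 0 ≤ traceNorm A :=
  Real.iSup_nonneg fun _ => norm_nonneg _

theorem traceNorm_add_le (A B : Matrix ι ι ℂ) : traceNorm (A + B) ≤ traceNorm A + traceNorm B :=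
  traceNorm_le fun Y hY => by
    rw [Matrix.mul_add, trace_add]
    exact norm_add_le_of_le (norm_trace_unitary_mul_le_traceNorm hY A)
      (norm_trace_unitary_mul_le_traceNorm hY B)

theorem traceNorm_smul_le (c : ℂ) (A : Matrix ι ι ℂ) : traceNorm (c • A) ≤ ‖c‖ * traceNorm A :=
  traceNorm_le fun Y hY => by
    rw [Matrix.mul_smul, trace_smul, norm_smul]
    exact mul_le_mul_of_nonneg_left (norm_trace_unitary_mul_le_traceNorm hY A) (norm_nonneg c)

theorem traceNorm_unitary_mul_le (hU : U ∈ unitaryGroup ι ℂ) (A : Matrix ι ι ℂ) :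
    traceNorm (U * A) ≤ traceNorm A :=
  traceNorm_le fun Y hY => by
    rw [← Matrix.mul_assoc]
    exact norm_trace_unitary_mul_le_traceNorm (mul_mem hY hU) A

theorem traceNorm_mul_unitary_le (hU : U ∈ unitaryGroup ι ℂ) (A : Matrix ι ι ℂ) :
    traceNorm (A * U) ≤ traceNorm A :=
  traceNorm_le fun Y hY => by
    rw [← Matrix.mul_assoc, trace_mul_comm, ← Matrix.mul_assoc]
    exact norm_trace_unitary_mul_le_traceNorm (mul_mem hU hY) A

theorem traceNorm_conjTranspose_le (A : Matrix ι ι ℂ) : traceNorm Aᴴ ≤ traceNorm A :=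
  traceNorm_le fun Y hY => by
    rw [← norm_star, ← trace_conjTranspose, conjTranspose_mul, conjTranspose_conjTranspose,
      trace_mul_comm]
    exact norm_trace_unitary_mul_le_traceNorm (Unitary.star_mem hY) A

theorem traceNorm_mul_le (A B : Matrix ι ι ℂ) : traceNorm (A * B) ≤ ‖A‖ * ‖B‖ :=
  traceNorm_le fun Y hY => by
    rw [← Matrix.mul_assoc, ← frobenius_norm_unitary_mul hY A]
    exact norm_trace_mul_le (Y * A) B

theorem traceNorm_sub_unitary_conj_le (hU : U ∈ unitaryGroup ι ℂ) (A : Matrix ι ι ℂ) :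
    traceNorm (A - Uᴴ * A * U) ≤ traceNorm ⁅U, A⁆ := by
  have factor : A - Uᴴ * A * U = Uᴴ * ⁅U, A⁆ := by
    rw [Ring.lie_def, Matrix.mul_sub, ← Matrix.mul_assoc, ← star_eq_conjTranspose,
      mem_unitaryGroup_iff'.1 hU, Matrix.one_mul, Matrix.mul_assoc]
  rw [factor]
  exact traceNorm_unitary_mul_le (Unitary.star_mem hU) _

theorem traceNorm_lie_conjTranspose_le (hU : U ∈ unitaryGroup ι ℂ) (A : Matrix ι ι ℂ) :
    traceNorm ⁅U, Aᴴ⁆ ≤ traceNorm ⁅U, A⁆ := by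
  have factor : ⁅U, Aᴴ⁆ = U * ⁅U, A⁆ᴴ * U := by
    simp only [Ring.lie_def, conjTranspose_sub, conjTranspose_mul, Matrix.mul_sub, Matrix.sub_mul,
      ← star_eq_conjTranspose U, Matrix.mul_assoc, mem_unitaryGroup_iff'.1 hU, Matrix.mul_one]
    rw [← Matrix.mul_assoc U (star U), mem_unitaryGroup_iff.1 hU, Matrix.one_mul]
  rw [factor]
  exact (traceNorm_mul_unitary_le hU _).trans <|
    (traceNorm_unitary_mul_le hU _).trans (traceNorm_conjTranspose_le _)

end TraceNorm

section Rank

open Matrix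

theorem rank_add_le_rank_add_rank {R m n : Type*} [Field R] [Finite m] [Fintype n]
    (A B : Matrix m n R) : (A + B).rank ≤ A.rank + B.rank := by
  rw [rank, rank, rank, mulVecLin_add]
  exact (Submodule.finrank_mono (LinearMap.range_add_le _ _)).trans
    (Submodule.finrank_add_le_finrank_add_finrank _ _)

theorem rank_sum_le {R m n β : Type*} [Field R] [Finite m] [Fintype n] (s : Finset β)
    (A : β → Matrix m n R) : (∑ i ∈ s, A i).rank ≤ ∑ i ∈ s, (A i).rank :=
  Finset.le_sum_of_subadditive _ rank_zero.le rank_add_le_rank_add_rank s A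

theorem rank_smul_le {R m n : Type*} [CommRing R] [StrongRankCondition R] [Fintype n]
    (A : Matrix m n R) (c : R) : (c • A).rank ≤ A.rank := by
  classical
  rw [← Matrix.mul_one A, ← Matrix.mul_smul]
  exact (rank_mul_le_left _ _).trans_eq (by rw [Matrix.mul_one])

end Rank

section SignedSquare

open Matrix
open scoped ComplexOrder MatrixOrder

theorem trace_mul_re_nonneg {n : Type*} [Fintype n] {A B : Matrix n n ℂ}
    (hA : A.PosSemidef) (hB : B.PosSemidef) :
    0 ≤ (A * B).trace.re := by
  classical
  obtain ⟨C, rfl⟩ := CStarAlgebra.nonneg_iff_eq_star_mul_self.1 hA.nonneg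
  rw [Matrix.mul_assoc, trace_mul_comm, star_eq_conjTranspose]
  exact (Complex.le_def.1 (hB.mul_mul_conjTranspose_same C).trace_nonneg).1

variable {ι : Type*} [Fintype ι] [DecidableEq ι] {v h H : Matrix ι ι ℂ}

/-- A polar decomposition `H = v h²` of a Hermitian matrix: `v` is a unitary sign of `H` and `h` is
the square root of the absolute value of `H`. -/
structure IsSignedSquare (v h H : Matrix ι ι ℂ) : Prop where
  isHermitian : v.IsHermitian
  mem_unitaryGroup : v ∈ unitaryGroup ι ℂ
  posSemidef : h.PosSemidef
  commute : Commute v h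
  mul_sq : v * (h * h) = H

theorem exists_isSignedSquare (hH : H.IsHermitian) : ∃ v h, IsSignedSquare v h H := by
  have cont (f : ℝ → ℝ) : ContinuousOn f (spectrum ℝ H) :=
    H.finite_real_spectrum.continuousOn f
  let s : ℝ → ℝ := fun x => if x < 0 then -1 else 1
  have s_mul_abs (x : ℝ) : s x * (√|x| * √|x|) = x := by
    simp only [s, Real.mul_self_sqrt (abs_nonneg x)]
    split_ifs with hx
    · rw [abs_of_neg hx, neg_one_mul, neg_neg]
    · rw [abs_of_nonneg (not_lt.1 hx), one_mul]
  have s_mul_self (x : ℝ) : s x * s x = 1 := by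
    simp only [s]
    split_ifs <;> norm_num
  have v_hermitian : (cfc s H).IsHermitian := cfc_predicate s H
  refine ⟨cfc s H, cfc (fun x => √|x|) H, v_hermitian, ?_, ?_, cfc_commute_cfc _ _ H, ?_⟩
  · rw [mem_unitaryGroup_iff, star_eq_conjTranspose, v_hermitian.eq,
      ← cfc_mul s s H (cont _) (cont _)]
    simp only [s_mul_self]
    exact cfc_const_one ℝ H hH
  · exact nonneg_iff_posSemidef.1 (cfc_nonneg fun x _ => Real.sqrt_nonneg _)
  · rw [← cfc_mul _ _ H (cont _) (cont _), ← cfc_mul _ _ H (cont _) (cont _)]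
    simp only [s_mul_abs]
    exact cfc_id' ℝ H hH

theorem mul_self_of_isHermitian_of_mem_unitaryGroup (hv : v.IsHermitian)
    (hv' : v ∈ unitaryGroup ι ℂ) : v * v = 1 := by
  rw [← mem_unitaryGroup_iff.1 hv', star_eq_conjTranspose, hv.eq]

theorem IsSignedSquare.mul_eq (hvh : IsSignedSquare v h H) : v * H = h * h := by
  rw [← hvh.mul_sq, ← Matrix.mul_assoc, mul_self_of_isHermitian_of_mem_unitaryGroup
    hvh.isHermitian hvh.mem_unitaryGroup, Matrix.one_mul]

theorem IsSignedSquare.rank_le (hvh : IsSignedSquare v h H) : h.rank ≤ H.rank := by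
  calc h.rank = (hᴴ * h).rank := (rank_conjTranspose_mul_self h).symm
    _ = (v * H).rank := by rw [hvh.posSemidef.isHermitian.eq, hvh.mul_eq]
    _ ≤ H.rank := rank_mul_le_right v H

theorem IsSignedSquare.neg (hvh : IsSignedSquare v h H) : IsSignedSquare (-v) h (-H) where
  isHermitian := hvh.isHermitian.neg
  mem_unitaryGroup := by
    rw [mem_unitaryGroup_iff, star_neg, neg_mul_neg]
    exact mem_unitaryGroup_iff.1 hvh.mem_unitaryGroup
  posSemidef := hvh.posSemidef
  commute := hvh.commute.neg_left
  mul_sq := by rw [Matrix.neg_mul, hvh.mul_sq]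

theorem IsSignedSquare.posSemidef_add (hvh : IsSignedSquare v h H) :
    (h * h + H).PosSemidef := by
  have v_sq := mul_self_of_isHermitian_of_mem_unitaryGroup hvh.isHermitian hvh.mem_unitaryGroup
  have factor : h * h + H = (1 / 2 : ℂ) • (((1 + v) * h) * ((1 + v) * h)ᴴ) := by
    have swap : h * (h * v) = v * (h * h) := by
      rw [← hvh.commute.eq, ← Matrix.mul_assoc, ← hvh.commute.eq, Matrix.mul_assoc]
    simp only [conjTranspose_mul, conjTranspose_add, hvh.isHermitian.eq,
      hvh.posSemidef.isHermitian.eq, Matrix.add_mul, Matrix.mul_add, Matrix.one_mul,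
      Matrix.mul_assoc, swap, ← hvh.mul_sq]
    rw [← Matrix.mul_assoc v v, v_sq, Matrix.one_mul]
    module
  rw [factor]
  exact (posSemidef_self_mul_conjTranspose _).smul (by simp)

theorem IsSignedSquare.posSemidef_sub (hvh : IsSignedSquare v h H) :
    (h * h - H).PosSemidef := by
  simpa only [sub_eq_add_neg] using hvh.neg.posSemidef_add

end SignedSquare

section Mazur

open Matrix
open scoped Matrix.Norms.Frobenius ComplexOrder

variable {ι : Type*} [Fintype ι] [DecidableEq ι] {v w h k H U : Matrix ι ι ℂ}

theorem norm_trace_sq_le_rank_mul (hH : H.IsHermitian) :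
    ‖H.trace‖ ^ 2 ≤ H.rank * ‖H‖ ^ 2 := by
  have norm_sq_eq : ‖H‖ ^ 2 = ∑ i, hH.eigenvalues i ^ 2 := by
    conv_lhs => rw [hH.spectral_theorem, Unitary.conjStarAlgAut_apply,
      frobenius_norm_mul_unitary (Unitary.star_mem hH.eigenvectorUnitary.2),
      frobenius_norm_unitary_mul hH.eigenvectorUnitary.2, frobenius_norm_diagonal,
      EuclideanSpace.norm_sq_eq]
    simp
  have trace_eq : ‖H.trace‖ = |∑ i with hH.eigenvalues i ≠ 0, hH.eigenvalues i| := by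
    rw [hH.trace_eq_sum_eigenvalues, Finset.sum_filter_ne_zero, ← RCLike.ofReal_sum,
      RCLike.norm_ofReal]
  rw [trace_eq, sq_abs, norm_sq_eq, hH.rank_eq_card_non_zero_eigs, Fintype.card_subtype]
  refine sq_sum_le_card_mul_sum_sq.trans ?_
  gcongr
  exact Finset.filter_subset _ _

theorem IsSignedSquare.norm_trace_le (hvh : IsSignedSquare v h H) : ‖H.trace‖ ≤ ‖h‖ ^ 2 := by
  rw [← hvh.mul_sq, ← Matrix.mul_assoc, sq]
  exact (norm_trace_mul_le _ _).trans_eq (by rw [frobenius_norm_unitary_mul hvh.mem_unitaryGroup])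

-- The Powers–Størmer inequality, obtained by testing `h² - k²` against the sign of `h - k`.
theorem norm_sub_sq_le_traceNorm (hh : h.PosSemidef) (hk : k.PosSemidef) :
    ‖h - k‖ ^ 2 ≤ traceNorm (h * h - k * k) := by
  have sub_hermitian : (h - k).IsHermitian := hh.isHermitian.sub hk.isHermitian
  obtain ⟨v, m, hvm⟩ := exists_isSignedSquare sub_hermitian
  have mul_sub_eq : v * (h - k) = m * m := hvm.mul_eq
  have sub_mul_eq : (h - k) * v = m * m := by
    simpa only [conjTranspose_mul, sub_hermitian.eq, hvm.isHermitian.eq,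
      hvm.posSemidef.isHermitian.eq] using congrArg conjTranspose mul_sub_eq
  have trace_sq_diff : (v * (h * h - k * k)).trace = (m * m * h).trace + (m * m * k).trace := by
    have sq_diff : h * h - k * k = (h - k) * h + k * (h - k) := by
      simp only [Matrix.sub_mul, Matrix.mul_sub]
      abel
    rw [sq_diff, Matrix.mul_add, trace_add, ← Matrix.mul_assoc, mul_sub_eq, ← Matrix.mul_assoc,
      trace_mul_comm (v * k), ← Matrix.mul_assoc, sub_mul_eq]
  have h_part := trace_mul_re_nonneg hvm.posSemidef_sub hh
  have k_part := trace_mul_re_nonneg hvm.posSemidef_add hk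
  rw [Matrix.sub_mul, trace_sub, Complex.sub_re] at h_part
  rw [Matrix.add_mul, trace_add, Complex.add_re] at k_part
  calc ‖h - k‖ ^ 2 = ((h - k) * h).trace.re - ((h - k) * k).trace.re := by
        rw [frobenius_norm_sq_eq_re_trace, sub_hermitian.eq, ← Complex.sub_re, ← trace_sub,
          ← Matrix.mul_sub]
    _ ≤ (m * m * h).trace.re + (m * m * k).trace.re := by linarith
    _ = (v * (h * h - k * k)).trace.re := by rw [trace_sq_diff, Complex.add_re]
    _ ≤ traceNorm (h * h - k * k) := (Complex.re_le_norm _).trans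
        (norm_trace_unitary_mul_le_traceNorm hvm.mem_unitaryGroup _)

theorem norm_mul_sub_mul_sq_le {δ : ℝ} (hv : v ∈ unitaryGroup ι ℂ)
    (hw : w ∈ unitaryGroup ι ℂ) (hw' : w.IsHermitian) (hh : h.IsHermitian)
    (hk : k.IsHermitian) (hnorm : ‖h‖ = ‖k‖)
    (hδ : traceNorm (v * (h * h) - w * (k * k)) ≤ δ) : ‖v * h - w * h‖ ^ 2 ≤ 2 * δ := by
  have polarization :
      ‖v * h - w * h‖ ^ 2 = 2 * ‖h‖ ^ 2 - 2 * ((w * h)ᴴ * (v * h)).trace.re := by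
    have cross_eq : ((v * h)ᴴ * (w * h)).trace.re = ((w * h)ᴴ * (v * h)).trace.re := by
      rw [← conjTranspose_conjTranspose (w * h), ← conjTranspose_mul, trace_conjTranspose,
        conjTranspose_conjTranspose, RCLike.star_def, Complex.conj_re]
    rw [frobenius_norm_sq_eq_re_trace, conjTranspose_sub]
    simp only [Matrix.sub_mul, Matrix.mul_sub, trace_sub, Complex.sub_re, cross_eq,
      ← frobenius_norm_sq_eq_re_trace, frobenius_norm_unitary_mul hv,
      frobenius_norm_unitary_mul hw]
    ring
  have trace_eq : (w * (v * (h * h) - w * (k * k))).trace.re =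
      ((w * h)ᴴ * (v * h)).trace.re - ‖k‖ ^ 2 := by
    rw [Matrix.mul_sub, ← Matrix.mul_assoc w w,
      mul_self_of_isHermitian_of_mem_unitaryGroup hw' hw, Matrix.one_mul, trace_sub,
      Complex.sub_re, frobenius_norm_sq_eq_re_trace, hk.eq, conjTranspose_mul, hh.eq, hw'.eq,
      ← Matrix.mul_assoc v, ← Matrix.mul_assoc w, trace_mul_comm, Matrix.mul_assoc h]
  have re_ge := (neg_le_of_abs_le (Complex.abs_re_le_norm _)).trans'
    (neg_le_neg ((norm_trace_unitary_mul_le_traceNorm hw _).trans hδ))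
  rw [trace_eq, ← hnorm] at re_ge
  linarith

theorem norm_sub_sq_le_of_traceNorm_le {δ : ℝ} (hv : v ∈ unitaryGroup ι ℂ)
    (hw : w ∈ unitaryGroup ι ℂ) (hw' : w.IsHermitian) (hh : h.PosSemidef)
    (hk : k.PosSemidef) (hnorm : ‖h‖ = ‖k‖)
    (hδ : traceNorm (v * (h * h) - w * (k * k)) ≤ δ) : ‖h - k‖ ^ 2 ≤ √(2 * δ) * ‖h‖ + δ := by
  have square_diff : h * h - k * k =
      w * (v * (h * h) - w * (k * k)) + (-w * (v * h - w * h)) * h := by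
    have := mul_self_of_isHermitian_of_mem_unitaryGroup hw' hw
    have (A : Matrix ι ι ℂ) : w * (w * A) = A := by rw [← Matrix.mul_assoc, this, Matrix.one_mul]
    simp only [Matrix.mul_sub, Matrix.sub_mul, Matrix.neg_mul, Matrix.mul_assoc, this]
    abel
  have phase_term : ‖-w * (v * h - w * h)‖ ≤ √(2 * δ) := by
    rw [Matrix.neg_mul, norm_neg, frobenius_norm_unitary_mul hw]
    exact Real.le_sqrt_of_sq_le (norm_mul_sub_mul_sq_le hv hw hw' hh.isHermitian hk.isHermitian
      hnorm hδ)
  calc ‖h - k‖ ^ 2 ≤ traceNorm (h * h - k * k) := norm_sub_sq_le_traceNorm hh hk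
    _ ≤ traceNorm (w * (v * (h * h) - w * (k * k))) +
        traceNorm ((-w * (v * h - w * h)) * h) := by
      rw [square_diff]
      exact traceNorm_add_le _ _
    _ ≤ δ + √(2 * δ) * ‖h‖ :=
      add_le_add ((traceNorm_unitary_mul_le hw _).trans hδ)
        ((traceNorm_mul_le _ _).trans (by gcongr))
    _ = √(2 * δ) * ‖h‖ + δ := add_comm _ _

theorem IsSignedSquare.norm_lie_sq_le {δ : ℝ} (hvh : IsSignedSquare v h H)
    (hU : U ∈ unitaryGroup ι ℂ) (hδ : traceNorm ⁅U, H⁆ ≤ δ) :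
    ‖⁅U, h⁆‖ ^ 2 ≤ √(2 * δ) * ‖h‖ + δ := by
  rw [← frobenius_norm_sub_unitary_conj hU]
  have cancel (A : Matrix ι ι ℂ) : U * (Uᴴ * A) = A := by
    rw [← Matrix.mul_assoc, ← star_eq_conjTranspose, mem_unitaryGroup_iff.1 hU, Matrix.one_mul]
  have conj_eq : Uᴴ * v * U * (Uᴴ * h * U * (Uᴴ * h * U)) = Uᴴ * H * U := by
    simp only [← hvh.mul_sq, Matrix.mul_assoc, cancel]
  refine norm_sub_sq_le_of_traceNorm_le (w := Uᴴ * v * U) hvh.mem_unitaryGroup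
    (mul_mem (mul_mem (Unitary.star_mem hU) hvh.mem_unitaryGroup) hU)
    (isHermitian_conjTranspose_mul_mul U hvh.isHermitian)
    hvh.posSemidef (hvh.posSemidef.conjTranspose_mul_mul_same U) ?_ ?_
  · rw [frobenius_norm_mul_unitary hU, ← star_eq_conjTranspose,
      frobenius_norm_unitary_mul (Unitary.star_mem hU)]
  · rw [hvh.mul_sq, conj_eq]
    exact (traceNorm_sub_unitary_conj_le hU H).trans hδ

end Mazur

section LowRank

open Matrix
open scoped Matrix.Norms.Frobenius ComplexOrder

variable {ι J : Type*} [Fintype ι] [DecidableEq ι] [Fintype J] [Nonempty J]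
  {U : J → Matrix ι ι ℂ} {K δ : ℝ}

theorem le_mul_of_le_mul_sqrt_add {L τ : ℝ} (hδ : 0 ≤ δ) (hτ : 0 ≤ τ)
    (h : τ ≤ 2 * L * (√(2 * δ) * √τ + δ)) : τ ≤ 4 * L * (2 * L + 1) * δ := by
  have am_gm := two_mul_le_add_sq (2 * L * √(2 * δ)) (√τ)
  rw [mul_pow, Real.sq_sqrt hτ, Real.sq_sqrt (mul_nonneg zero_le_two hδ)] at am_gm
  linarith

theorem IsQuantumExpander.norm_trace_le_of_isHermitian (hU : IsQuantumExpander U K) (hK : 0 ≤ K)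
    {H : Matrix ι ι ℂ} (hH : H.IsHermitian) (hrank : 2 * H.rank ≤ Fintype.card ι)
    (hδ : ∀ j, traceNorm ⁅U j, H⁆ ≤ δ) :
    ‖H.trace‖ ≤ 4 * (Fintype.card J * K) * (2 * (Fintype.card J * K) + 1) * δ := by
  have δ_nonneg : 0 ≤ δ := (traceNorm_nonneg _).trans (hδ (Classical.arbitrary J))
  cases isEmpty_or_nonempty ι
  · simp only [trace, Finset.univ_eq_empty, Finset.sum_empty, norm_zero]
    positivity
  obtain ⟨v, h, hvh⟩ := exists_isSignedSquare hH
  refine hvh.norm_trace_le.trans ?_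
  have card_pos : (0 : ℝ) < Fintype.card ι := Nat.cast_pos.2 Fintype.card_pos
  have trace_sq_le : ‖h.trace‖ ^ 2 ≤ Fintype.card ι / 2 * ‖h‖ ^ 2 := by
    refine (norm_trace_sq_le_rank_mul hvh.posSemidef.isHermitian).trans ?_
    gcongr
    have := Nat.cast_le (α := ℝ).2 ((Nat.mul_le_mul_left 2 hvh.rank_le).trans hrank)
    push_cast at this
    linarith
  have sum_lie_le : K * ∑ j, ‖⁅U j, h⁆‖ ^ 2 ≤
      Fintype.card J * K * (√(2 * δ) * ‖h‖ + δ) := by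
    calc K * ∑ j, ‖⁅U j, h⁆‖ ^ 2 ≤ K * ∑ _j : J, (√(2 * δ) * ‖h‖ + δ) := by
          gcongr with j
          exact hvh.norm_lie_sq_le (hU.mem_unitaryGroup j) (hδ j)
      _ = _ := by rw [Finset.sum_const, Finset.card_univ, nsmul_eq_mul]; ring
  have gap : Fintype.card ι * ‖h‖ ^ 2 ≤ Fintype.card ι *
      (‖h‖ ^ 2 / 2 + Fintype.card J * K * (√(2 * δ) * ‖h‖ + δ)) := by
    have := mul_le_mul_of_nonneg_left sum_lie_le card_pos.le
    have := hU.card_mul_norm_sq_le h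
    linarith
  refine le_mul_of_le_mul_sqrt_add δ_nonneg (sq_nonneg _) ?_
  rw [Real.sqrt_sq (norm_nonneg h)]
  linarith [le_of_mul_le_mul_left gap card_pos]

theorem IsQuantumExpander.norm_trace_le (hU : IsQuantumExpander U K) (hK : 0 ≤ K)
    {A : Matrix ι ι ℂ} (hrank : 4 * A.rank ≤ Fintype.card ι)
    (hδ : ∀ j, traceNorm ⁅U j, A⁆ ≤ δ) :
    ‖A.trace‖ ≤ 4 * (Fintype.card J * K) * (2 * (Fintype.card J * K) + 1) * δ := by
  obtain ⟨c, norm_c, trace_eq⟩ := RCLike.exists_norm_eq_mul_self A.trace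
  have trace_add : ‖(c • A + (c • A)ᴴ).trace‖ = 2 * ‖A.trace‖ := by
    rw [Matrix.trace_add, trace_conjTranspose, trace_smul, smul_eq_mul, ← trace_eq]
    simp [← two_mul]
  have rank_le : 2 * (c • A + (c • A)ᴴ).rank ≤ Fintype.card ι := by
    have := rank_add_le_rank_add_rank (c • A) (c • A)ᴴ
    have := rank_smul_le A c
    rw [rank_conjTranspose] at *
    lia
  have lie_le (j : J) : traceNorm ⁅U j, c • A + (c • A)ᴴ⁆ ≤ 2 * δ := by
    have lie_smul_le : traceNorm ⁅U j, c • A⁆ ≤ δ := by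
      have lie_smul : ⁅U j, c • A⁆ = c • ⁅U j, A⁆ := by
        simp only [Ring.lie_def, Matrix.mul_smul, Matrix.smul_mul, smul_sub]
      rw [lie_smul]
      simpa only [norm_c, one_mul] using (traceNorm_smul_le c ⁅U j, A⁆).trans
        (mul_le_mul_of_nonneg_left (hδ j) (norm_nonneg c))
    have lie_add : ⁅U j, c • A + (c • A)ᴴ⁆ = ⁅U j, c • A⁆ + ⁅U j, (c • A)ᴴ⁆ := by
      simp only [Ring.lie_def, mul_add, add_mul, add_sub_add_comm]
    rw [lie_add, two_mul]
    exact (traceNorm_add_le _ _).trans (add_le_add lie_smul_le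
      ((traceNorm_lie_conjTranspose_le (hU.mem_unitaryGroup j) _).trans lie_smul_le))
  have := hU.norm_trace_le_of_isHermitian hK (isHermitian_add_transpose_self (c • A)) rank_le lie_le
  linarith

end LowRank

section Slice

open Matrix
open scoped Matrix.Norms.L2Operator

theorem norm_apply_le_l2_opNorm {m n : Type*} [Fintype m] [Fintype n] [DecidableEq n]
    (M : Matrix m n ℂ) (i : m) (j : n) : ‖M i j‖ ≤ ‖M‖ := by
  have column := l2_opNorm_mulVec M (EuclideanSpace.single j 1)
  simpa using (PiLp.norm_apply_le _ i).trans column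

variable {A ι : Type*} [NormedRing A] [NormedAlgebra ℂ A] [Fintype ι] [DecidableEq ι]
  (φ : A →ₐ[ℂ] Matrix ι ι ℂ) (r : ι)

/-- The slice at `r` of a tensor over an algebra represented by matrices: the linear extension of
`a ⊗ b ↦ φ(a) e_r e_r* φ(b)`. -/
def slice : A ⊗[ℂ] A →ₗ[ℂ] Matrix ι ι ℂ :=
  LinearMap.mul' ℂ (Matrix ι ι ℂ) ∘ₗ
    TensorProduct.map (LinearMap.mulRight ℂ (single r r 1) ∘ₗ φ.toLinearMap) φ.toLinearMap

theorem slice_tmul (a b : A) : slice φ r (a ⊗ₜ b) = φ a * single r r 1 * φ b := rfl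

theorem slice_actL (u : A) (T : A ⊗[ℂ] A) : slice φ r (actL u T) = φ u * slice φ r T := by
  induction T with
  | zero => simp only [map_zero, Matrix.mul_zero]
  | add x y hx hy => simp only [map_add, hx, hy, Matrix.mul_add]
  | tmul a b =>
    simp only [actL, TensorProduct.map_tmul, slice_tmul, LinearMap.mulLeft_apply,
      LinearMap.id_apply, map_mul, Matrix.mul_assoc]

theorem slice_actR (u : A) (T : A ⊗[ℂ] A) : slice φ r (actR u T) = slice φ r T * φ u := by
  induction T with
  | zero => simp only [map_zero, Matrix.zero_mul]
  | add x y hx hy => simp only [map_add, hx, hy, Matrix.add_mul]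
  | tmul a b =>
    simp only [actR, TensorProduct.map_tmul, slice_tmul, LinearMap.mulRight_apply,
      LinearMap.id_apply, map_mul, Matrix.mul_assoc]

theorem sum_slice (T : A ⊗[ℂ] A) : ∑ r, slice φ r T = φ (LinearMap.mul' ℂ A T) := by
  induction T with
  | zero => simp only [map_zero, Finset.sum_const_zero]
  | add x y hx hy => simp only [map_add, Finset.sum_add_distrib, hx, hy]
  | tmul a b =>
    simp only [slice_tmul, ← Finset.sum_mul, ← Finset.mul_sum, sum_single_one, Matrix.mul_one,
      LinearMap.mul'_apply, map_mul]

theorem rank_slice_tmul_le (a b : A) : (slice φ r (a ⊗ₜ b)).rank ≤ 1 := by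
  rw [slice_tmul, single_eq_single_vecMulVec_single]
  exact (rank_mul_le_left _ _).trans ((rank_mul_le_right _ _).trans (rank_vecMulVec_le _ _))

theorem rank_slice_sum_le {β : Type*} (s : Finset β) (a b : β → A) :
    (slice φ r (∑ i ∈ s, a i ⊗ₜ b i)).rank ≤ s.card := by
  rw [map_sum, Finset.card_eq_sum_ones]
  exact (rank_sum_le _ _).trans (Finset.sum_le_sum fun i _ => rank_slice_tmul_le φ r (a i) (b i))

variable {φ}

theorem traceNorm_slice_tmul_le (hφ : ∀ a, ‖φ a‖ ≤ ‖a‖) (a b : A) :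
    traceNorm (slice φ r (a ⊗ₜ b)) ≤ ‖a‖ * ‖b‖ := by
  refine traceNorm_le fun Y hY => ?_
  have entry_eq : (Y * slice φ r (a ⊗ₜ b)).trace = (φ b * Y * φ a) r r := by
    rw [slice_tmul, ← Matrix.mul_assoc, trace_mul_comm, ← Matrix.mul_assoc, ← Matrix.mul_assoc,
      trace_mul_single, MulOpposite.op_one, one_smul]
  have norm_Y : ‖Y‖ ≤ 1 :=
    haveI : Nonempty ι := ⟨r⟩
    (CStarRing.norm_of_mem_unitary hY).le
  rw [entry_eq]
  calc ‖(φ b * Y * φ a) r r‖ ≤ ‖φ b * Y * φ a‖ := norm_apply_le_l2_opNorm _ r r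
    _ ≤ ‖φ b‖ * ‖Y‖ * ‖φ a‖ := norm_mul₃_le
    _ ≤ ‖b‖ * 1 * ‖a‖ := by gcongr <;> apply hφ
    _ = ‖a‖ * ‖b‖ := by ring

theorem traceNorm_slice_le (hφ : ∀ a, ‖φ a‖ ≤ ‖a‖) (W : A ⊗[ℂ] A) :
    traceNorm (slice φ r W) ≤ projSeminorm W := by
  refine le_csInf ?_ ?_
  · obtain ⟨s, hs⟩ := TensorProduct.exists_finset W
    refine ⟨_, s.card, fun j => (s.equivFin.symm j).1.1, fun j => (s.equivFin.symm j).1.2, ?_, rfl⟩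
    rw [hs, ← Finset.sum_coe_sort s fun p => p.1 ⊗ₜ[ℂ] p.2]
    exact (Equiv.sum_comp s.equivFin.symm fun p : s => p.1.1 ⊗ₜ[ℂ] p.1.2).symm
  · rintro _ ⟨n, x, y, rfl, rfl⟩
    rw [map_sum]
    exact (Finset.le_sum_of_subadditive traceNorm (by simp [traceNorm]) traceNorm_add_le _ _).trans
      (Finset.sum_le_sum fun j _ => traceNorm_slice_tmul_le r hφ _ _)

end Slice

section Obstruction

open Matrix
open scoped Matrix.Norms.L2Operator

variable {A ι J : Type*} [NormedRing A] [NormedAlgebra ℂ A] [Fintype ι] [DecidableEq ι]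
  [Nonempty ι] [Fintype J]

theorem IsQuantumExpander.one_le_of_projSeminorm_le [Nonempty J] {φ : A →ₐ[ℂ] Matrix ι ι ℂ}
    (hφ : ∀ a, ‖φ a‖ ≤ ‖a‖) {u : J → A} {K δ : ℝ} (hu : IsQuantumExpander (fun j => φ (u j)) K)
    (hK : 0 ≤ K) {s : Finset (A × A)} (hs : 4 * s.card ≤ Fintype.card ι) {T : A ⊗[ℂ] A}
    (hsum : T = ∑ p ∈ s, p.1 ⊗ₜ p.2) (hT : LinearMap.mul' ℂ A T = 1)
    (hδ : ∀ j, projSeminorm (actL (u j) T - actR (u j) T) ≤ δ) :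
    1 ≤ 4 * (Fintype.card J * K) * (2 * (Fintype.card J * K) + 1) * δ := by
  have norm_trace_slice_le (r : ι) : ‖(slice φ r T).trace‖ ≤
      4 * (Fintype.card J * K) * (2 * (Fintype.card J * K) + 1) * δ := by
    refine hu.norm_trace_le hK ((Nat.mul_le_mul_left 4 ?_).trans hs) fun j => ?_
    · rw [hsum]
      exact rank_slice_sum_le φ r s _ _
    · rw [Ring.lie_def, ← slice_actL, ← slice_actR, ← map_sub]
      exact (traceNorm_slice_le r hφ _).trans (hδ j)
  have sum_trace : ∑ r, (slice φ r T).trace = Fintype.card ι := by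
    rw [← trace_sum, sum_slice, hT, map_one, trace_one]
  have card_pos : (0 : ℝ) < Fintype.card ι := Nat.cast_pos.2 Fintype.card_pos
  refine le_of_mul_le_mul_left ?_ card_pos
  calc (Fintype.card ι : ℝ) * 1 = ‖∑ r, (slice φ r T).trace‖ := by
        rw [sum_trace, mul_one, Complex.norm_natCast]
    _ ≤ ∑ _r : ι, 4 * (Fintype.card J * K) * (2 * (Fintype.card J * K) + 1) * δ :=
        norm_sum_le_of_le _ fun r _ => norm_trace_slice_le r
    _ = _ := by rw [Finset.sum_const, Finset.card_univ, nsmul_eq_mul]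

/-- A family `u` in a normed algebra is residually expanding if contractive matrix representations
of arbitrarily large size carry it to quantum expanders with the common constant `K`. -/
def IsResiduallyExpanding (u : J → A) (K : ℝ) : Prop :=
  ∀ n, ∃ k ≥ n, ∃ φ : A →ₐ[ℂ] Matrix (Fin k) (Fin k) ℂ,
    (∀ a, ‖φ a‖ ≤ ‖a‖) ∧ IsQuantumExpander (fun j => φ (u j)) K

theorem IsResiduallyExpanding.exists_forall_not_projSeminorm_lt [Nonempty J] {u : J → A} {K : ℝ}
    (hu : IsResiduallyExpanding u K) (hK : 0 ≤ K) :
    ∃ ε > (0 : ℝ), ∀ T : A ⊗[ℂ] A, LinearMap.mul' ℂ A T = 1 →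
      ¬ ∀ j, projSeminorm (actL (u j) T - actR (u j) T) < ε := by
  let C : ℝ := 4 * (Fintype.card J * K) * (2 * (Fintype.card J * K) + 1)
  have C_add_one_pos : 0 < C + 1 := by
    simp only [C]
    positivity
  refine ⟨(C + 1)⁻¹, inv_pos.2 C_add_one_pos, fun T hT invariant => ?_⟩
  obtain ⟨s, hs⟩ := TensorProduct.exists_finset T
  obtain ⟨k, le_k, φ, hφ, expander⟩ := hu (4 * s.card + 1)
  have : NeZero k := ⟨by lia⟩
  have one_le : 1 ≤ C * (C + 1)⁻¹ :=
    expander.one_le_of_projSeminorm_le hφ hK (by rw [Fintype.card_fin]; lia) hs hT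
      fun j => (invariant j).le
  rw [← div_eq_mul_inv, one_le_div C_add_one_pos] at one_le
  linarith

end Obstruction

section LpMn

open Matrix
open scoped Matrix.Norms.L2Operator

/-- The `k`-th coordinate of an element of `lpMn`, as a matrix of size `k + 1`. -/
def coordMatrix (k : ℕ) : lpMn →ₐ[ℂ] Matrix (Fin (k + 1)) (Fin (k + 1)) ℂ where
  toFun a := (toEuclideanCLM (𝕜 := ℂ)).symm (a k)
  map_one' := by rw [lp.infty_coeFn_one, Pi.one_apply, map_one]
  map_mul' a b := by rw [lp.infty_coeFn_mul, Pi.mul_apply, map_mul]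
  map_zero' := by rw [lp.coeFn_zero, Pi.zero_apply, map_zero]
  map_add' a b := by rw [lp.coeFn_add, Pi.add_apply, map_add]
  commutes' c := by
    rw [Algebra.algebraMap_eq_smul_one, lp.coeFn_smul, Pi.smul_apply, lp.infty_coeFn_one,
      Pi.one_apply, map_smul, map_one, Algebra.algebraMap_eq_smul_one]

theorem norm_coordMatrix_le (k : ℕ) (a : lpMn) : ‖coordMatrix k a‖ ≤ ‖a‖ := by
  have clm_eq : toEuclideanCLM (𝕜 := ℂ) (coordMatrix k a) = a k :=
    StarAlgEquiv.apply_symm_apply _ _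
  rw [cstar_norm_def, clm_eq]
  exact lp.norm_apply_le_norm ENNReal.top_ne_zero a k

theorem exists_mem_unitary_coordMatrix_eq {V : ∀ k, Matrix (Fin (k + 1)) (Fin (k + 1)) ℂ}
    (hV : ∀ k, V k ∈ unitaryGroup (Fin (k + 1)) ℂ) :
    ∃ v ∈ unitary lpMn, ∀ k, coordMatrix k v = V k := by
  have mem_unitary (k : ℕ) := Unitary.map_mem (toEuclideanCLM (𝕜 := ℂ) (n := Fin (k + 1))) (hV k)
  refine ⟨⟨fun k => toEuclideanCLM (𝕜 := ℂ) (V k), memℓp_infty ⟨1, ?_⟩⟩,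
    Unitary.mem_iff.2 ⟨?_, ?_⟩, fun k =>
      (toEuclideanCLM (𝕜 := ℂ)).symm_apply_apply (V k)⟩
  · rintro _ ⟨k, rfl⟩
    exact (CStarRing.norm_of_mem_unitary (mem_unitary k)).le
  · ext1
    funext k
    exact (Unitary.mem_iff.1 (mem_unitary k)).1
  · ext1
    funext k
    exact (Unitary.mem_iff.1 (mem_unitary k)).2

theorem exists_isResiduallyExpanding_lpMn :
    ∃ u : Fin 3 → lpMn, (∀ j, u j ∈ unitary lpMn) ∧ IsResiduallyExpanding u 240 := by
  choose U hU using fun k : ℕ => exists_isQuantumExpander (k + 1)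
  choose u mem_unitary coord_eq using fun j : Fin 3 =>
    exists_mem_unitary_coordMatrix_eq fun k => (hU k).mem_unitaryGroup j
  exact ⟨u, mem_unitary, fun n => ⟨n + 1, n.le_succ, coordMatrix n, norm_coordMatrix_le n,
    by simpa only [coord_eq] using hU n⟩⟩

end LpMn

/-- `ℓ∞(𝕄_n) = ℓ∞-⊕_{n=1}^∞ M_n(ℂ)` admits no approximately invariant normalized
diagonal: there exist `ε > 0` and finitely many unitaries `u₁,…,u_t` such that no
element `T` of the algebraic tensor product `M ⊗ M` whose image under the
multiplication map is `1` satisfies `‖uⱼ·T − T·uⱼ‖_π < ε` for all `j`.  Consequently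
`ℓ∞(𝕄_n)` is not approximately amenable, answering negatively the question of
Ghahramani–Loy. -/
theorem lpMn_no_approx_invariant_diagonal :
    ∃ ε > (0 : ℝ), ∃ (t : ℕ) (u : Fin t → lpMn),
      (∀ j, u j ∈ unitary lpMn) ∧
      ∀ T : lpMn ⊗[ℂ] lpMn, LinearMap.mul' ℂ lpMn T = 1 →
        ¬ (∀ j, projSeminorm (actL (u j) T - actR (u j) T) < ε) := by
  obtain ⟨u, mem_unitary, expanding⟩ := exists_isResiduallyExpanding_lpMn
  obtain ⟨ε, ε_pos, hε⟩ := expanding.exists_forall_not_projSeminorm_lt (by norm_num)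
  exact ⟨ε, ε_pos, 3, u, mem_unitary, hε⟩

end
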